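/- arXiv:1407.1777 — 3 statements merged into one kernel-verified Lean document; each statement's English description precedes it below -/
import Mathlib

section
/- For every integer k ≥ 2, the complex number z_k = 1 + 3i/k satisfies Re(z_k^k) < 0. -/
/-!
With `θ = arctan (3 / k)`, the number `cos θ * z_k` equals `cos θ + i sin θ`, so by de Moivre
`Re (z_k ^ k)` is a positive multiple of `cos (k θ)`. It remains to see `π / 2 < k θ < 3 π / 2`.
The upper bound follows from `arctan t < t`, which gives `k θ < 3`. The lower bound amounts to
`tan (π / (2 k)) < 3 / k`; since `π / (2 k) ≤ π / 4`, we have `cos (π / (2 k)) ≥ √2 / 2 > 0.7`,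
and `sin x < x` then gives `tan (π / (2 k)) < π / (1.4 k) < 3 / k`.
-/

theorem tan_pi_div_two_mul_lt (k : ℕ) (hk : 2 ≤ k) :
    Real.tan (Real.pi / (2 * k)) < 3 / k := by
  have hkR : (2 : ℝ) ≤ k := by exact_mod_cast hk
  have hpi := Real.pi_pos
  have hx0 : 0 < Real.pi / (2 * k) := by positivity
  have hx4 : Real.pi / (2 * k) ≤ Real.pi / 4 := by
    apply div_le_div_of_nonneg_left hpi.le <;> linarith
  have hcos : (0.7 : ℝ) < Real.cos (Real.pi / (2 * k)) := by
    have h1 := Real.cos_le_cos_of_nonneg_of_le_pi hx0.le (by linarith) hx4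
    rw [Real.cos_pi_div_four] at h1
    have h2 : (1.4 : ℝ) < √2 := Real.lt_sqrt_of_sq_lt (by norm_num)
    linarith
  rw [Real.tan_eq_sin_div_cos, div_lt_iff₀ (by linarith)]
  calc Real.sin (Real.pi / (2 * k)) < Real.pi / (2 * k) := Real.sin_lt hx0
    _ = Real.pi / 2 / k := by field_simp
    _ ≤ 2.1 / k := by gcongr; linarith [Real.pi_lt_d2]
    _ = 3 / k * 0.7 := by ring
    _ ≤ 3 / k * Real.cos (Real.pi / (2 * k)) := by gcongr

theorem re_zk_pow_neg (k : ℕ) (hk : 2 ≤ k) :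
    (((1 : ℂ) + 3 * Complex.I / k) ^ k).re < 0 := by
  have hk0 : (0 : ℝ) < k := by exact_mod_cast (by omega : 0 < k)
  have hkR : (2 : ℝ) ≤ k := by exact_mod_cast hk
  have hpi := Real.pi_pos
  set θ : ℝ := Real.arctan (3 / k) with hθ
  have hc : 0 < Real.cos θ := Real.cos_arctan_pos _
  have hs : Real.sin θ = 3 / k * Real.cos θ := by
    rw [← Real.tan_mul_cos hc.ne', hθ, Real.tan_arctan]
  have hlow : Real.pi / 2 < k * θ := by
    have hlt : Real.pi / (2 * k) < Real.pi / 2 :=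
      div_lt_div_of_pos_left hpi two_pos (by linarith)
    have h : Real.pi / (2 * k) < θ := by
      have h1 := Real.arctan_strictMono (tan_pi_div_two_mul_lt k hk)
      have h0 : 0 < Real.pi / (2 * k) := by positivity
      rwa [Real.arctan_tan (by linarith) hlt] at h1
    rw [div_lt_iff₀ (by positivity)] at h
    linarith
  have hup : k * θ ≤ 3 := by
    have h0 : 0 < θ := Real.arctan_pos.mpr (by positivity)
    have h : θ < 3 / k := by
      have := Real.lt_tan h0 (Real.arctan_lt_pi_div_two _)
      rwa [hθ, Real.tan_arctan] at this
    rw [lt_div_iff₀ hk0] at h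
    linarith
  have hneg : Real.cos (k * θ) < 0 :=
    Real.cos_neg_of_pi_div_two_lt_of_lt hlow (by linarith [Real.pi_gt_three])
  have hz : ((Real.cos θ : ℝ) : ℂ) * (1 + 3 * Complex.I / k)
      = Complex.cos θ + Complex.sin θ * Complex.I := by
    rw [← Complex.ofReal_cos, ← Complex.ofReal_sin, hs]
    push_cast
    ring
  have hre : Real.cos θ ^ k * (((1 : ℂ) + 3 * Complex.I / k) ^ k).re = Real.cos (k * θ) := by
    have h := congrArg (fun w : ℂ => (w ^ k).re) hz
    simp only [mul_pow, Complex.cos_add_sin_mul_I_pow] at h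
    rw [← Complex.ofReal_pow, Complex.re_ofReal_mul] at h
    rw [h, ← Complex.ofReal_natCast, ← Complex.ofReal_mul, ← Complex.ofReal_cos,
      ← Complex.ofReal_sin]
    simp only [Complex.add_re, Complex.re_ofReal_mul, Complex.ofReal_re, Complex.I_re,
      mul_zero, add_zero]
  have hck : 0 < Real.cos θ ^ k := pow_pos hc k
  by_contra! hcon
  linarith [mul_nonneg hck.le hcon]
end

section
/- Let k ≥ 2 be an integer and for each integer j ≥ 0 set x_j = C(k, 2j) · (3/k)^{2j}, with the convention that the binomial coefficient C(k, ℓ) = 0 whenever ℓ > k. Then for every integer p ≥ 0, −x_{2p+1} + x_{2p+2} ≤ 0. -/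
/-!
Consecutive terms satisfy `C(k, n+2) (n+1)(n+2) = C(k, n) (k-n)(k-n-1) ≤ C(k, n) k²`. For
`n = 4p + 2` one has `(n+1)(n+2) ≥ 12 ≥ 9 = 3²`, so `C(k, n+2) (3/k)² ≤ C(k, n)`; multiplying by
`(3/k)^n` gives `x_{2p+2} ≤ x_{2p+1}`.
-/

theorem choose_add_two_mul_le (k n : ℕ) :
    k.choose (n + 2) * ((n + 1) * (n + 2)) ≤ k.choose n * k ^ 2 := by
  have h1 := Nat.choose_succ_right_eq k n
  have h2 := Nat.choose_succ_right_eq k (n + 1)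
  calc k.choose (n + 2) * ((n + 1) * (n + 2))
      = (k.choose (n + 1 + 1) * (n + 1 + 1)) * (n + 1) := by ring
    _ = (k.choose (n + 1) * (n + 1)) * (k - (n + 1)) := by rw [h2]; ring
    _ = k.choose n * ((k - n) * (k - (n + 1))) := by rw [h1]; ring
    _ ≤ k.choose n * (k * k) := by gcongr <;> exact Nat.sub_le _ _
    _ = k.choose n * k ^ 2 := by ring

theorem pair_sum_nonpos (k : ℕ) (hk : 2 ≤ k) (p : ℕ) :
    -((k.choose (2 * (2 * p + 1)) : ℝ) * (3 / k) ^ (2 * (2 * p + 1))) +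
      (k.choose (2 * (2 * p + 2)) : ℝ) * (3 / k) ^ (2 * (2 * p + 2)) ≤ 0 := by
  obtain ⟨n, hn⟩ : ∃ n, n = 2 * (2 * p + 1) := ⟨_, rfl⟩
  have hn2 : 2 * (2 * p + 2) = n + 2 := by omega
  rw [hn2, ← hn]
  have h9 : k.choose (n + 2) * 9 ≤ k.choose n * k ^ 2 := by
    refine le_trans (Nat.mul_le_mul_left _ ?_) (choose_add_two_mul_le k n)
    have : 2 ≤ n := by omega
    nlinarith
  have h9' : (k.choose (n + 2) : ℝ) * 9 ≤ k.choose n * (k : ℝ) ^ 2 := by exact_mod_cast h9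
  have hk0 : (0 : ℝ) < k := by exact_mod_cast (by omega : 0 < k)
  have hstep : (k.choose (n + 2) : ℝ) * (3 / k) ^ 2 ≤ k.choose n := by
    rw [div_pow, ← mul_div_assoc, div_le_iff₀ (by positivity)]
    norm_num
    exact h9'
  have hpow : (0 : ℝ) ≤ (3 / k) ^ n := by positivity
  have := mul_le_mul_of_nonneg_right hstep hpow
  rw [pow_add]
  linarith
end

section
/- For every integer k ≥ 2, the complex number z_{2k} = 1 + 3i/(2k) satisfies Im(z_{2k}^k) ≠ 0. -/
/-!
Put `a = 3 / (2k)` and `θ = arctan a`. Multiplying `1 + a i` by `cos θ > 0` gives `cos θ + i sin θ`,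
so by de Moivre the imaginary part of the `k`-th power is a positive multiple of `sin (k θ)`.
Since `0 < θ < tan θ = a`, we have `0 < k θ < 3 / 2 < π`, and the sine is positive.
-/

theorem im_z2k_pow_ne_zero (k : ℕ) (hk : 2 ≤ k) :
    (((1 : ℂ) + 3 * Complex.I / (2 * k)) ^ k).im ≠ 0 := by
  have hk0 : (0 : ℝ) < k := by exact_mod_cast (by omega : 0 < k)
  set a : ℝ := 3 / (2 * k) with ha
  have ha0 : 0 < a := by positivity
  have hka : k * a = 3 / 2 := by rw [ha]; field_simp
  set θ := Real.arctan a with hθ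
  have hθ0 : 0 < θ := Real.arctan_pos.2 ha0
  have hc : 0 < Real.cos θ := Real.cos_arctan_pos a
  have hθa : θ < a := by
    have h := Real.lt_tan hθ0 (Real.arctan_lt_pi_div_two a)
    rwa [hθ, Real.tan_arctan] at h
  have hs : a * Real.cos θ = Real.sin θ := by
    rw [← Real.tan_mul_cos hc.ne', hθ, Real.tan_arctan]
  have hpos : 0 < Real.sin (k * θ) := by
    apply Real.sin_pos_of_pos_of_lt_pi (by positivity)
    nlinarith [Real.pi_gt_three, mul_lt_mul_of_pos_left hθa hk0]
  have hz : (Real.cos θ : ℂ) * (1 + 3 * Complex.I / (2 * k)) =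
      Complex.cos θ + Complex.sin θ * Complex.I := by
    rw [← Complex.ofReal_sin, ← hs, ha, ← Complex.ofReal_cos]
    push_cast
    ring
  have him : Real.cos θ ^ k * (((1 : ℂ) + 3 * Complex.I / (2 * k)) ^ k).im =
      Real.sin (k * θ) := by
    have h := congrArg Complex.im (congrArg (· ^ k) hz)
    simp only [mul_pow, Complex.cos_add_sin_mul_I_pow] at h
    rw [← Complex.ofReal_pow, Complex.im_ofReal_mul, ← Complex.ofReal_natCast,
      ← Complex.ofReal_mul, ← Complex.ofReal_cos, ← Complex.ofReal_sin] at h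
    rwa [Complex.add_im, Complex.ofReal_im, Complex.mul_I_im, Complex.ofReal_re, zero_add] at h
  intro h
  rw [h, mul_zero] at him
  exact hpos.ne him
end
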